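/- arXiv:2411.08763 — 2 statements merged into one kernel-verified Lean document; each statement's English description precedes it below -/
import Mathlib

section
/- Let C = K = L^∞_{++}, let S = (0,∞) (the strictly positive constant random variables), let π(x) = x for x ∈ S, and let B be any relative acceptance set, i.e., a nonempty proper subset of K that is monotone. Then for every X ∈ int(L^∞_+), the associated MARRM satisfies η(X) > 0. -/
/-!
Fix a position `Y ∉ B` with `Y ≤ c`, and let `ε ≤ X`. If `0 < Z ≤ ε / c`, then
`Y ≤ c ≤ ε / Z ≤ X / Z`, so accepting `X / Z` would force accepting `Y`. Hence no security with
payoff uniformly below `ε / c` makes `X` acceptable, and prices of the remaining ones stay away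
from zero.
-/

open MeasureTheory Filter Set ENNReal

/-- The set of strictly positive random variables (positive representatives of
elements of `L⁰₊₊`). -/
def L0pos (Ω : Type*) : Set (Ω → ℝ) := {X | ∀ ω, 0 < X ω}

/-- The multi-asset return risk measure (MARRM) associated with the security set `S`,
the relative acceptance set `B` and the pricing map `π`:
`η(X) = inf {π(Z) : Z ∈ S, X/Z ∈ B}`, with `inf ∅ = ∞`. -/
noncomputable def marrm {Ω : Type*} (S B : Set (Ω → ℝ)) (π : (Ω → ℝ) → ℝ) (X : Ω → ℝ) : ℝ≥0∞ :=
  sInf ((fun Z => ENNReal.ofReal (π Z)) '' {Z | Z ∈ S ∧ (fun ω => X ω / Z ω) ∈ B})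

/-- `L^∞₊₊`: strictly positive, (essentially) bounded random variables. -/
def LinftyPos {Ω : Type*} [MeasurableSpace Ω] (P : Measure Ω) : Set (Ω → ℝ) :=
  {X | (∀ ω, 0 < X ω) ∧ ∃ c : ℝ, ∀ᵐ ω ∂P, X ω ≤ c}

/-- `int(L^∞₊)`: bounded random variables that are a.s. bounded below by a
positive constant. -/
def intLinftyPlus {Ω : Type*} [MeasurableSpace Ω] (P : Measure Ω) : Set (Ω → ℝ) :=
  {X | (∃ c : ℝ, ∀ᵐ ω ∂P, |X ω| ≤ c) ∧ ∃ ε : ℝ, 0 < ε ∧ ∀ᵐ ω ∂P, ε ≤ X ω}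

/-- Small prices force small payoffs: below a suitable positive price level, every security in `S`
has payoff a.e. at most a prescribed `r > 0`. It is the property of the pricing map `π` that keeps
the MARRM away from zero. The payoffs are meant to be positive, so only upper bounds are imposed. -/
def PriceControlsPayoff {Ω : Type*} [MeasurableSpace Ω] (P : Measure Ω) (S : Set (Ω → ℝ))
    (π : (Ω → ℝ) → ℝ) : Prop :=
  ∀ r : ℝ, 0 < r → ∃ δ : ℝ, 0 < δ ∧ ∀ Z ∈ S, π Z < δ → ∀ᵐ ω ∂P, Z ω ≤ r

theorem le_div_of_le_div_of_le {𝕜 : Type*} [Field 𝕜] [LinearOrder 𝕜] [IsStrictOrderedRing 𝕜]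
    {x y z c ε : 𝕜} (hc : 0 < c) (hz : 0 < z) (hzle : z ≤ ε / c) (hy : y ≤ c) (hx : ε ≤ x) :
    y ≤ x / z :=
  calc
    y ≤ c := hy
    _ ≤ ε / z := (le_div_comm₀ hz hc).1 hzle
    _ ≤ x / z := div_le_div_of_nonneg_right hx hz.le

section MARRM

variable {Ω : Type*} {S B : Set (Ω → ℝ)} {π : (Ω → ℝ) → ℝ} {X : Ω → ℝ}

theorem le_marrm_iff {a : ℝ≥0∞} :
    a ≤ marrm S B π X ↔
      ∀ Z ∈ S, (fun ω => X ω / Z ω) ∈ B → a ≤ ENNReal.ofReal (π Z) := by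
  simp only [marrm, le_sInf_iff, forall_mem_image, mem_ofPred_eq, and_imp]

theorem marrm_pos_of_forall_le {δ : ℝ} (hδ : 0 < δ)
    (h : ∀ Z ∈ S, (fun ω => X ω / Z ω) ∈ B → δ ≤ π Z) : 0 < marrm S B π X :=
  (ENNReal.ofReal_pos.2 hδ).trans_le <|
    le_marrm_iff.2 fun Z hZ hXZ => ENNReal.ofReal_le_ofReal (h Z hZ hXZ)

variable [MeasurableSpace Ω] {P : Measure Ω}

theorem priceControlsPayoff_const (hπ : ∀ c : ℝ, 0 < c → π (fun _ => c) = c) :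
    PriceControlsPayoff P {Z | ∃ c : ℝ, 0 < c ∧ Z = fun _ => c} π := by
  refine fun r hr => ⟨r, hr, ?_⟩
  rintro _ ⟨c, hc, rfl⟩ hprice
  rw [hπ c hc] at hprice
  exact .of_forall fun _ => hprice.le

theorem marrm_pos_of_intLinfty_general {K : Set (Ω → ℝ)} {Y : Ω → ℝ}
    (hSpos : S ⊆ L0pos Ω) (hπ : PriceControlsPayoff P S π)
    (hBmono : ∀ V ∈ B, ∀ W ∈ K, (∀ᵐ ω ∂P, W ω ≤ V ω) → W ∈ B)
    (hYK : Y ∈ K) (hYB : Y ∉ B) (hYbdd : ∃ c : ℝ, ∀ᵐ ω ∂P, Y ω ≤ c)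
    (hX : ∃ ε : ℝ, 0 < ε ∧ ∀ᵐ ω ∂P, ε ≤ X ω) :
    0 < marrm S B π X := by
  obtain ⟨ε, hε, hεX⟩ := hX
  obtain ⟨c, hc, hYc⟩ : ∃ c : ℝ, 0 < c ∧ ∀ᵐ ω ∂P, Y ω ≤ c := by
    obtain ⟨c, hYc⟩ := hYbdd
    exact ⟨max c 1, by positivity, hYc.mono fun _ h => le_max_of_le_left h⟩
  obtain ⟨δ, hδ, hsmall⟩ := hπ (ε / c) (div_pos hε hc)
  refine marrm_pos_of_forall_le hδ fun Z hZ hXZ => ?_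
  by_contra! hprice
  have hYXZ : ∀ᵐ ω ∂P, Y ω ≤ X ω / Z ω := by
    filter_upwards [hsmall Z hZ hprice, hYc, hεX] with ω hZω hYω hXω
    exact le_div_of_le_div_of_le hc (hSpos hZ ω) hZω hYω hXω
  exact hYB (hBmono _ hXZ Y hYK hYXZ)

end MARRM

theorem marrm_pos_of_intLinfty {Ω : Type*} [MeasurableSpace Ω] (P : Measure Ω) [IsProbabilityMeasure P]
    (C S K B : Set (Ω → ℝ)) (π : (Ω → ℝ) → ℝ)
    (hCne : C.Nonempty) (hCpos : C ⊆ L0pos Ω)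
    (hSne : S.Nonempty) (hSpos : S ⊆ L0pos Ω)
    (hπpos : ∀ Z ∈ S, 0 < π Z)
    (hKne : K.Nonempty) (hKpos : K ⊆ L0pos Ω)
    (hcompat : ∀ X ∈ C, ∀ Z ∈ S, (fun ω => X ω / Z ω) ∈ K)
    (hBne : B.Nonempty) (hBsub : B ⊆ K) (hBproper : B ≠ K)
    (hBmono : ∀ X ∈ B, ∀ Y ∈ K, (∀ᵐ ω ∂P, Y ω ≤ X ω) → Y ∈ B)
    (hCeq : C = LinftyPos P) (hKeq : K = LinftyPos P)
    (hSeq : S = {Z | ∃ c : ℝ, 0 < c ∧ Z = fun _ => c})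
    (hπid : ∀ c : ℝ, 0 < c → π (fun _ => c) = c) :
    ∀ X ∈ intLinftyPlus P, 0 < marrm S B π X := by
  rintro X ⟨-, hX⟩
  obtain ⟨Y, hYK, hYB⟩ := exists_of_ssubset (hBsub.ssubset_of_ne hBproper)
  have hYbdd : ∃ c : ℝ, ∀ᵐ ω ∂P, Y ω ≤ c := (hKeq ▸ hYK : Y ∈ LinftyPos P).2
  exact marrm_pos_of_intLinfty_general hSpos (hSeq ▸ priceControlsPayoff_const hπid) hBmono
    hYK hYB hYbdd hX
end

section
/- In the RRM setting, suppose additionally that C is star-shaped (λC ⊆ C for all λ ∈ (0,1)). Then the MARRM η is star-shaped (η(λX) ≤ λ·η(X) for all λ ∈ (0,1), X ∈ C) if and only if the associated MARM ρ is cash-superadditive, i.e., ρ(Y + r) ≤ ρ(Y) + r for all Y ∈ C_log and all r ∈ (−∞, 0) (extended-real arithmetic). -/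
open MeasureTheory Filter Set ENNReal

/-- The image of a set of random variables under the pointwise logarithm,
e.g. `C_log = {log X : X ∈ C}`. -/
def logIm {Ω : Type*} (A : Set (Ω → ℝ)) : Set (Ω → ℝ) :=
  (fun X => fun ω => Real.log (X ω)) '' A

/-- The multi-asset risk measure (MARM) with security set `Slog`, acceptance set `Anu`
and pricing map `πlog`: `ρ(Y) = inf {πlog(L) : L ∈ Slog, Y - L ∈ Anu}`, with
values in `[-∞,∞]` and `inf ∅ = +∞`. -/
noncomputable def marm {Ω : Type*} (Slog Anu : Set (Ω → ℝ)) (πlog : (Ω → ℝ) → ℝ)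
    (Y : Ω → ℝ) : EReal :=
  sInf ((fun L => (πlog L : EReal)) '' {L | L ∈ Slog ∧ (fun ω => Y ω - L ω) ∈ Anu})

/-- The relative acceptance set `B_ρ̃ = {X ∈ K : ρ̃(X) ≤ 1}` induced by a
return risk measure `ρt` on `K`. -/
def rrmAccept {Ω : Type*} (K : Set (Ω → ℝ)) (ρt : (Ω → ℝ) → ℝ) : Set (Ω → ℝ) :=
  {X | X ∈ K ∧ ρt X ≤ 1}

/-- The MARM associated with a return risk measurement regime `(B_ρ̃, S, π)` in the
RRM setting: security set `S_log`, acceptance set `A_ν = {Y ∈ K_log : ν(Y) ≤ 0}` with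
`ν = log ∘ ρ̃ ∘ exp`, and pricing map `π_log = log ∘ π ∘ exp`. -/
noncomputable def marmOf {Ω : Type*} (S K : Set (Ω → ℝ)) (π ρt : (Ω → ℝ) → ℝ) :
    (Ω → ℝ) → EReal :=
  marm (logIm S) {L | L ∈ logIm K ∧ Real.log (ρt (fun ω => Real.exp (L ω))) ≤ 0}
    (fun L => Real.log (π (fun ω => Real.exp (L ω))))

/-! Pointwise logarithms turn quotients into differences, so `log` carries the infimum defining the
MARRM into the one defining the MARM: `ρ (log X) = log (η X)`. Taking logarithms in
`η (l X) ≤ l η X` then gives the cash-superadditivity inequality at `Y = log X` and `r = log l`, and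
`l ↦ log l` maps `(0, 1)` onto `(-∞, 0)`. -/

/-- Star-shapedness on `C` of a functional `η` with values in `[0, ∞]`. As `η` is defined on
all random variables, `η (l X)` makes sense even when `l X ∉ C`. -/
def IsStarShapedOn {Ω : Type*} (η : (Ω → ℝ) → ℝ≥0∞) (C : Set (Ω → ℝ)) : Prop :=
  ∀ l ∈ Ioo (0 : ℝ) 1, ∀ X ∈ C, η (fun ω => l * X ω) ≤ ENNReal.ofReal l * η X

/-- Cash-superadditivity on `D` of a functional `ρ` with values in `[-∞, ∞]`. As `r` is real, the
sum `ρ Y + r` is never of the form `∞ - ∞`. -/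
def IsCashSuperadditiveOn {Ω : Type*} (ρ : (Ω → ℝ) → EReal) (D : Set (Ω → ℝ)) : Prop :=
  ∀ Y ∈ D, ∀ r : ℝ, r < 0 → ρ (fun ω => Y ω + r) ≤ ρ Y + (r : EReal)

theorem le_ofReal_mul_iff_log_le_log_add {a b : ℝ≥0∞} {l : ℝ} (hl : 0 < l) :
    a ≤ ENNReal.ofReal l * b ↔ ENNReal.log a ≤ ENNReal.log b + (Real.log l : EReal) := by
  rw [← ENNReal.log_ofReal_of_pos hl, add_comm, ← ENNReal.log_mul_add, ENNReal.log_le_log_iff]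

section

variable {Ω : Type*} {A B C K S : Set (Ω → ℝ)} {X : Ω → ℝ} {π ρt : (Ω → ℝ) → ℝ}

theorem exp_log_of_mem_L0pos (hX : X ∈ L0pos Ω) : (fun ω => Real.exp (Real.log (X ω))) = X :=
  funext fun ω => Real.exp_log (hX ω)

theorem injOn_log_L0pos : InjOn (fun (X : Ω → ℝ) ω => Real.log (X ω)) (L0pos Ω) :=
  LeftInvOn.injOn (f₁' := fun Y ω => Real.exp (Y ω)) fun _ => exp_log_of_mem_L0pos

theorem log_mem_logIm_iff (hA : A ⊆ L0pos Ω) (hX : X ∈ L0pos Ω) :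
    (fun ω => Real.log (X ω)) ∈ logIm A ↔ X ∈ A :=
  injOn_log_L0pos.mem_image_iff hA hX

theorem log_sub_log_mem_logIm_iff {Z : Ω → ℝ} (hB : B ⊆ L0pos Ω) (hX : X ∈ L0pos Ω)
    (hZ : Z ∈ L0pos Ω) :
    (fun ω => Real.log (X ω) - Real.log (Z ω)) ∈ logIm B ↔ (fun ω => X ω / Z ω) ∈ B := by
  have hlog : (fun ω => Real.log (X ω) - Real.log (Z ω)) = fun ω => Real.log (X ω / Z ω) :=
    funext fun ω => (Real.log_div (hX ω).ne' (hZ ω).ne').symm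
  rw [hlog, log_mem_logIm_iff hB fun ω => div_pos (hX ω) (hZ ω)]

theorem logIm_setOf_div_mem (hS : S ⊆ L0pos Ω) (hB : B ⊆ L0pos Ω) (hX : X ∈ L0pos Ω) :
    logIm {Z | Z ∈ S ∧ (fun ω => X ω / Z ω) ∈ B} =
      {L | L ∈ logIm S ∧ (fun ω => Real.log (X ω) - L ω) ∈ logIm B} := by
  ext L
  constructor
  · rintro ⟨Z, ⟨hZ, hXZ⟩, rfl⟩
    exact ⟨⟨Z, hZ, rfl⟩, (log_sub_log_mem_logIm_iff hB hX (hS hZ)).2 hXZ⟩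
  · rintro ⟨⟨Z, hZ, rfl⟩, hXZ⟩
    exact ⟨Z, ⟨hZ, (log_sub_log_mem_logIm_iff hB hX (hS hZ)).1 hXZ⟩, rfl⟩

theorem marm_logIm_eq_log_marrm (hS : S ⊆ L0pos Ω) (hπ : ∀ Z ∈ S, 0 < π Z) (hB : B ⊆ L0pos Ω)
    (hX : X ∈ L0pos Ω) :
    marm (logIm S) (logIm B) (fun L => Real.log (π fun ω => Real.exp (L ω)))
        (fun ω => Real.log (X ω)) =
      ENNReal.log (marrm S B π X) := by
  have hprice : ∀ Z ∈ S, ((Real.log (π fun ω => Real.exp (Real.log (Z ω))) : ℝ) : EReal) =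
      ENNReal.log (ENNReal.ofReal (π Z)) := fun Z hZ => by
    rw [exp_log_of_mem_L0pos (hS hZ), ENNReal.log_ofReal_of_pos (hπ Z hZ)]
  rw [marm, ← logIm_setOf_div_mem hS hB hX, logIm, image_image, marrm, ← ENNReal.logOrderIso_apply,
    map_sInf, image_image]
  exact congrArg sInf (image_congr fun Z hZ => hprice Z hZ.1)

theorem logIm_rrmAccept (hK : K ⊆ L0pos Ω) (hρ : ∀ X ∈ K, 0 < ρt X) :
    logIm (rrmAccept K ρt) =
      {L | L ∈ logIm K ∧ Real.log (ρt fun ω => Real.exp (L ω)) ≤ 0} := by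
  have hlog : ∀ X ∈ K, Real.log (ρt fun ω => Real.exp (Real.log (X ω))) ≤ 0 ↔ ρt X ≤ 1 :=
    fun X hX => by rw [exp_log_of_mem_L0pos (hK hX), Real.log_nonpos_iff (hρ X hX).le]
  ext L
  constructor
  · rintro ⟨X, ⟨hX, hX_le⟩, rfl⟩
    exact ⟨⟨X, hX, rfl⟩, (hlog X hX).2 hX_le⟩
  · rintro ⟨⟨X, hX, rfl⟩, hX_le⟩
    exact ⟨X, ⟨hX, (hlog X hX).1 hX_le⟩, rfl⟩

theorem marmOf_log_eq_log_marrm (hS : S ⊆ L0pos Ω) (hπ : ∀ Z ∈ S, 0 < π Z) (hK : K ⊆ L0pos Ω)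
    (hρ : ∀ X ∈ K, 0 < ρt X) (hX : X ∈ L0pos Ω) :
    marmOf S K π ρt (fun ω => Real.log (X ω)) = ENNReal.log (marrm S (rrmAccept K ρt) π X) := by
  rw [marmOf, ← logIm_rrmAccept hK hρ]
  exact marm_logIm_eq_log_marrm hS hπ (fun _ hY => hK hY.1) hX

theorem isStarShapedOn_iff_isCashSuperadditiveOn_logIm {η : (Ω → ℝ) → ℝ≥0∞}
    {ρ : (Ω → ℝ) → EReal} (hC : C ⊆ L0pos Ω)
    (hρη : ∀ X ∈ L0pos Ω, ρ (fun ω => Real.log (X ω)) = ENNReal.log (η X)) :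
    IsStarShapedOn η C ↔ IsCashSuperadditiveOn ρ (logIm C) := by
  have hscale : ∀ l : ℝ, 0 < l → ∀ X ∈ C, (η (fun ω => l * X ω) ≤ ENNReal.ofReal l * η X ↔
      ρ (fun ω => Real.log (X ω) + Real.log l) ≤
        ρ (fun ω => Real.log (X ω)) + (Real.log l : EReal)) := fun l hl X hX => by
    have hlog : (fun ω => Real.log (X ω) + Real.log l) = fun ω => Real.log (l * X ω) :=
      funext fun ω => by rw [Real.log_mul hl.ne' (hC hX ω).ne', add_comm]
    rw [hlog, hρη _ fun ω => mul_pos hl (hC hX ω), hρη X (hC hX),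
      le_ofReal_mul_iff_log_le_log_add hl]
  constructor
  · rintro hη _ ⟨X, hX, rfl⟩ r hr
    simpa only [Real.log_exp] using (hscale _ (Real.exp_pos r) X hX).1
      (hη _ ⟨Real.exp_pos r, Real.exp_lt_one_iff.2 hr⟩ X hX)
  · intro hρ l hl X hX
    exact (hscale l hl.1 X hX).2 (hρ _ ⟨X, hX, rfl⟩ _ (Real.log_neg hl.1 hl.2))

theorem marrm_starShaped_iff_marm_cashSuperadditive_general (hC : C ⊆ L0pos Ω) (hS : S ⊆ L0pos Ω)
    (hπ : ∀ Z ∈ S, 0 < π Z) (hK : K ⊆ L0pos Ω) (hρ : ∀ X ∈ K, 0 < ρt X) :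
    IsStarShapedOn (marrm S (rrmAccept K ρt) π) C ↔
      IsCashSuperadditiveOn (marmOf S K π ρt) (logIm C) :=
  isStarShapedOn_iff_isCashSuperadditiveOn_logIm hC fun _ => marmOf_log_eq_log_marrm hS hπ hK hρ

end

theorem marrm_starShaped_iff_marm_cashSuperadditive {Ω : Type*} [MeasurableSpace Ω] (P : Measure Ω) [IsProbabilityMeasure P]
    (C S K : Set (Ω → ℝ)) (π ρt : (Ω → ℝ) → ℝ)
    (hCne : C.Nonempty) (hCpos : C ⊆ L0pos Ω)
    (hSne : S.Nonempty) (hSpos : S ⊆ L0pos Ω)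
    (hπpos : ∀ Z ∈ S, 0 < π Z)
    (hKne : K.Nonempty) (hKpos : K ⊆ L0pos Ω)
    (hKcone : ∀ l : ℝ, 0 < l → ∀ X ∈ K, (fun ω => l * X ω) ∈ K)
    (hKinf : LinftyPos P ⊆ K)
    (hcompat : ∀ X ∈ C, ∀ Z ∈ S, (fun ω => X ω / Z ω) ∈ K)
    (hCmul : ∀ X ∈ C, ∀ Y ∈ C, (fun ω => X ω * Y ω) ∈ C)
    (hCone : (fun _ => (1:ℝ)) ∈ C)
    (hCinv : ∀ X ∈ C, (fun ω => (X ω)⁻¹) ∈ C)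
    (hρmono : ∀ X ∈ K, ∀ Y ∈ K, (∀ᵐ ω ∂P, X ω ≤ Y ω) → ρt X ≤ ρt Y)
    (hρhom : ∀ l : ℝ, 0 < l → ∀ X ∈ K, ρt (fun ω => l * X ω) = l * ρt X)
    (hρpos : ∀ X ∈ K, 0 < ρt X)
    (hρone : ρt (fun _ => (1:ℝ)) = 1)
    (hCstar : ∀ l ∈ Set.Ioo (0:ℝ) 1, ∀ X ∈ C, (fun ω => l * X ω) ∈ C) :
    (∀ l ∈ Set.Ioo (0:ℝ) 1, ∀ X ∈ C,
        marrm S (rrmAccept K ρt) π (fun ω => l * X ω)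
          ≤ ENNReal.ofReal l * marrm S (rrmAccept K ρt) π X)
      ↔ (∀ Y ∈ logIm C, ∀ r : ℝ, r < 0 →
        marmOf S K π ρt (fun ω => Y ω + r) ≤ marmOf S K π ρt Y + (r : EReal)) :=
  marrm_starShaped_iff_marm_cashSuperadditive_general hCpos hSpos hπpos hKpos hρpos
end
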